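/- Let G = (V,E,W) and H = (V,E,W') be two strongly connected weighted graphs on the same finite node set V with |V| = n and the same edge set E. Then for every node x ∈ V, the closeness decentrality satisfies |C̄_C^G(x) − C̄_C^H(x)| ≤ n · d_{(V,E)}(G,H). In particular, closeness decentrality is a stable centrality measure with stability constant K_G = n. -/

import Mathlib

/-!
Stability already holds for each single distance: `s_G(x,y) ≤ s_H(x,y) + d(G,H)`. Deleting cycles
from a walk does not increase its `H`-length, so the infimum defining `s_H(x,y)` may be tested on
walks with pairwise distinct nodes (`exists_nodup_walk`). Such a walk traverses each edge at most
once, so its `G`- and `H`-lengths differ by at most the sum of `|W e - W' e|` over distinct edges,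
hence by at most `d(G,H)` (`walkLength_le_add`). By symmetry the distances differ by at most
`d(G,H)`, and summing over the `n` endpoints gives the bound. Strong connectivity makes all
distances finite, so that `ENNReal.toReal` loses nothing.
-/

open scoped ENNReal

/-- `p` is the tail of a walk from `x` to `y` along edges of `E`:
the node sequence of the walk is `x :: p` and consecutive nodes are joined by edges in `E`. -/
def IsWalkFrom {V : Type*} (E : Finset (V × V)) (x y : V) (p : List V) : Prop :=
  List.Chain (fun a b => (a, b) ∈ E) x p ∧ (x :: p).getLast (List.cons_ne_nil x p) = y

/-- The length of the walk with node sequence `x :: p`: the sum of the weights of the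
traversed edges (as an extended nonnegative real). -/
noncomputable def walkLength {V : Type*} (W : V × V → ℝ) (x : V) (p : List V) : ℝ≥0∞ :=
  (((x :: p).zip p).map fun e => ENNReal.ofReal (W e)).sum

/-- Shortest path length `s_G(x,y)`: the infimum of the lengths of all paths from `x`
to `y`, equal to `∞` when no such path exists. -/
noncomputable def spdist {V : Type*} (E : Finset (V × V)) (W : V × V → ℝ) (x y : V) : ℝ≥0∞ :=
  sInf {l : ℝ≥0∞ | ∃ p : List V, IsWalkFrom E x y p ∧ l = walkLength W x p}

/-- The ℓ¹ metric `d_{(V,E)}` on the space of weighted graphs sharing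
the node set `V` and edge set `E`. -/
def graphDist {V : Type*} (E : Finset (V × V)) (W W' : V × V → ℝ) : ℝ :=
  ∑ e ∈ E, |W e - W' e|

/-- Closeness decentrality `C̄_C(x) = ∑_{x' ∈ V} s_G(x,x')`. -/
noncomputable def closenessDecentrality {V : Type*} [Fintype V] (E : Finset (V × V))
    (W : V × V → ℝ) (x : V) : ℝ :=
  ∑ y : V, (spdist E W x y).toReal

lemma isWalkFrom_cons {V : Type*} {E : Finset (V × V)} {x y z : V} {p : List V} :
    IsWalkFrom E x y (z :: p) ↔ (x, z) ∈ E ∧ IsWalkFrom E z y p := by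
  simp [IsWalkFrom, List.Chain, and_assoc]

lemma walkLength_cons {V : Type*} (W : V × V → ℝ) (x z : V) (p : List V) :
    walkLength W x (z :: p) = ENNReal.ofReal (W (x, z)) + walkLength W z p := by
  simp [walkLength]

lemma walkLength_ne_top {V : Type*} (W : V × V → ℝ) (x : V) (p : List V) :
    walkLength W x p ≠ ∞ := by
  induction p generalizing x with
  | nil => simp [walkLength]
  | cons z p ih => simp [walkLength_cons, ih z]

/-- A walk can be entered at any of its nodes; the remaining part is no longer than the whole. -/
lemma exists_suffix_walk {V : Type*} {E : Finset (V × V)} (W : V × V → ℝ) {x y : V} (q : List V)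
    (a : V) (hq : IsWalkFrom E a y q) (hx : x ∈ a :: q) :
    ∃ r, IsWalkFrom E x y r ∧ (x :: r) <:+ (a :: q) ∧ walkLength W x r ≤ walkLength W a q := by
  induction q generalizing a with
  | nil =>
    obtain rfl : x = a := by simpa using hx
    exact ⟨[], hq, List.suffix_rfl, le_rfl⟩
  | cons z q ih =>
    rcases List.mem_cons.1 hx with rfl | hx
    · exact ⟨_, hq, List.suffix_rfl, le_rfl⟩
    · obtain ⟨r, h1, h2, h3⟩ := ih z (isWalkFrom_cons.1 hq).2 hx
      refine ⟨r, h1, h2.trans (List.suffix_cons _ _), h3.trans ?_⟩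
      rw [walkLength_cons]
      exact le_add_self

/-- Cycles can be removed from a walk without increasing its length. -/
lemma exists_nodup_walk {V : Type*} {E : Finset (V × V)} (W : V × V → ℝ) {y : V} (p : List V)
    (x : V) (hp : IsWalkFrom E x y p) :
    ∃ q, IsWalkFrom E x y q ∧ (x :: q).Nodup ∧ walkLength W x q ≤ walkLength W x p := by
  induction p generalizing x with
  | nil => exact ⟨[], hp, by simp, le_rfl⟩
  | cons z p ih =>
    obtain ⟨hxz, hp⟩ := isWalkFrom_cons.1 hp
    obtain ⟨q, h1, h2, h3⟩ := ih z hp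
    rw [walkLength_cons]
    by_cases hx : x ∈ z :: q
    · obtain ⟨r, h4, h5, h6⟩ := exists_suffix_walk W q z h1 hx
      exact ⟨r, h4, h2.sublist h5.sublist, (h6.trans h3).trans le_add_self⟩
    · refine ⟨z :: q, isWalkFrom_cons.2 ⟨hxz, h1⟩, List.nodup_cons.2 ⟨hx, h2⟩, ?_⟩
      rw [walkLength_cons]
      gcongr

lemma mem_of_mem_zip {V : Type*} {E : Finset (V × V)} {y : V} (p : List V) (x : V)
    (hp : IsWalkFrom E x y p) : ∀ e ∈ (x :: p).zip p, e ∈ E := by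
  induction p generalizing x with
  | nil => simp
  | cons z p ih =>
    obtain ⟨hxz, hp⟩ := isWalkFrom_cons.1 hp
    intro e he
    rw [List.zip_cons_cons, List.mem_cons] at he
    rcases he with rfl | he
    · exact hxz
    · exact ih z hp e he

/-- A walk with distinct nodes uses every edge at most once. -/
lemma nodup_zip {V : Type*} (p : List V) (x : V) (h : (x :: p).Nodup) :
    ((x :: p).zip p).Nodup := by
  have hs : ((x :: p).zip p).map Prod.snd = p := List.map_snd_zip (by simp)
  exact List.Nodup.of_map Prod.snd (hs.symm ▸ (List.nodup_cons.1 h).2)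

lemma walkLength_le_add {V : Type*} {E : Finset (V × V)} (W W' : V × V → ℝ) {x y : V}
    {p : List V} (hp : IsWalkFrom E x y p) (hn : (x :: p).Nodup) :
    walkLength W x p ≤ walkLength W' x p + ENNReal.ofReal (graphDist E W W') := by
  classical
  have hE : ((x :: p).zip p).toFinset ⊆ E := fun e he =>
    mem_of_mem_zip p x hp e (List.mem_toFinset.1 he)
  have hl := nodup_zip p x hn
  rw [graphDist, ENNReal.ofReal_sum_of_nonneg fun _ _ => abs_nonneg _]
  simp only [walkLength]
  rw [← List.sum_toFinset _ hl, ← List.sum_toFinset _ hl]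
  calc
    _ ≤ ∑ e ∈ ((x :: p).zip p).toFinset,
        (ENNReal.ofReal (W' e) + ENNReal.ofReal |W e - W' e|) := by
      refine Finset.sum_le_sum fun e _ => ?_
      refine le_trans (ENNReal.ofReal_le_ofReal ?_) ENNReal.ofReal_add_le
      linarith [le_abs_self (W e - W' e)]
    _ ≤ _ := by
      rw [Finset.sum_add_distrib]
      gcongr

lemma spdist_le_add {V : Type*} (E : Finset (V × V)) (W W' : V × V → ℝ) (x y : V) :
    spdist E W x y ≤ spdist E W' x y + ENNReal.ofReal (graphDist E W W') := by
  rw [← tsub_le_iff_right]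
  refine le_sInf ?_
  rintro _ ⟨p, hp, rfl⟩
  rw [tsub_le_iff_right]
  obtain ⟨q, h1, h2, h3⟩ := exists_nodup_walk W' p x hp
  calc
    spdist E W x y ≤ walkLength W x q := sInf_le ⟨q, h1, rfl⟩
    _ ≤ _ := walkLength_le_add W W' h1 h2
    _ ≤ _ := by gcongr

lemma graphDist_nonneg {V : Type*} (E : Finset (V × V)) (W W' : V × V → ℝ) :
    0 ≤ graphDist E W W' :=
  Finset.sum_nonneg fun _ _ => abs_nonneg _

lemma toReal_spdist_le_add {V : Type*} (E : Finset (V × V)) (W W' : V × V → ℝ) (x y : V)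
    (h : ∃ p, IsWalkFrom E x y p) :
    (spdist E W x y).toReal ≤ (spdist E W' x y).toReal + graphDist E W W' := by
  obtain ⟨p, hp⟩ := h
  have hfin : spdist E W' x y ≠ ∞ :=
    ne_top_of_le_ne_top (walkLength_ne_top W' x p) (sInf_le ⟨p, hp, rfl⟩)
  have := ENNReal.toReal_mono (by simp [hfin]) (spdist_le_add E W W' x y)
  rwa [ENNReal.toReal_add hfin ENNReal.ofReal_ne_top,
    ENNReal.toReal_ofReal (graphDist_nonneg E W W')] at this

/-- Proposition 2: for strongly connected graphs `G=(V,E,W)` and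
`H=(V,E,W')` on `n` nodes, `|C̄_C^G(x) - C̄_C^H(x)| ≤ n ⬝ d_{(V,E)}(G,H)` for every
node `x`; i.e. closeness decentrality is stable with constant `K_G = n`. -/
theorem closeness_decentrality_stable
    {V : Type*} [Fintype V] [DecidableEq V]
    (E : Finset (V × V)) (hE : ∀ e ∈ E, e.1 ≠ e.2)
    (W W' : V × V → ℝ)
    (hW : ∀ e ∈ E, 0 < W e) (hW' : ∀ e ∈ E, 0 < W' e)
    (hconn : ∀ a b : V, ∃ p : List V, IsWalkFrom E a b p)
    (x : V) :
    |closenessDecentrality E W x - closenessDecentrality E W' x| ≤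
      (Fintype.card V : ℝ) * graphDist E W W' := by
  have hcomm : graphDist E W' W = graphDist E W W' := by
    simp only [graphDist, abs_sub_comm]
  have hd (y : V) : |(spdist E W x y).toReal - (spdist E W' x y).toReal| ≤ graphDist E W W' := by
    have h1 := toReal_spdist_le_add E W W' x y (hconn x y)
    have h2 := toReal_spdist_le_add E W' W x y (hconn x y)
    rw [abs_le]
    constructor <;> linarith
  rw [closenessDecentrality, closenessDecentrality, ← Finset.sum_sub_distrib]
  calc
    _ ≤ ∑ y : V, |(spdist E W x y).toReal - (spdist E W' x y).toReal| :=
      Finset.abs_sum_le_sum_abs _ _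
    _ ≤ ∑ _y : V, graphDist E W W' := Finset.sum_le_sum fun y _ => hd y
    _ = _ := by simp
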